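/- Let R be a 3-dimensional regular local ring with maximal ideal m = (x, y, z), and let I be the ideal generated by the maximal minors of ((x, y, z), (y, z, x²)). Then for every n ≥ 2 and every 1 ≤ k ≤ ⌊n/2⌋, length_R((Iⁿ :_R m^k)/(Iⁿ :_R m^{k−1})) = C(n − 2k + 2, 2). -/

import Mathlib

open IsLocalRing

/-- `M` has (finite) length `n` over `R`: there is a composition series from
`⊥` to `⊤` of length `n`. -/
def HasLength (R M : Type*) [CommRing R] [AddCommGroup M] [Module R M] (n : ℕ) : Prop :=
  ∃ s : CompositionSeries (Submodule R M), s.head = ⊥ ∧ s.last = ⊤ ∧ s.length = n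

/-! Let `a`, `b`, `c` be the minors generating `I`. Since `x` divides `b ^ 2 - a * c`, there is an
element `δ` of the second symbolic power of `I` with `x * δ = b ^ 2 - a * c`, and `m * δ ⊆ I ^ 2`.
Hence `m ^ k` multiplies the layer `L k = ∑_{i ≤ k} δ ^ i * I ^ (n - 2 * i)` into `I ^ n`.

Conversely, let `u * m ^ k ⊆ I ^ n`. Modulo `x` every element of interest becomes a monomial in `y`
and `z`, and comparing those monomials shows that `x` is regular modulo the largest layer, so that
`u` lies in it. Moreover `u` has order at least `2 * n - k`. But `L (k + 1)` arises from `L k` by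
adding generators `δ ^ (k + 1) * v i` of order `2 * n - k - 1` whose leading forms are linearly
independent over the residue field, so an element of `L (k + 1)` of larger order is already in
`L k`. Descending through the layers gives `u ∈ L k`.

The same independence shows that the length of `L (k + 1) / L k` is the number of generators of
`I ^ (n - 2 * (k + 1))`. These are counted by `I ^ (d + 2) = K + x * δ * I ^ d`, where `K` is
generated by the `2 * d + 5` monomials of degree `d + 2` in `a`, `b`, `c` that are at most linear
in `b`. -/

open RingTheory.Sequence

section RegularLocalRing

variable {R : Type*} [CommRing R]

lemma maximalIdeal_quotient_eq_map [IsLocalRing R] (I : Ideal R) [IsLocalRing (R ⧸ I)] :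
    maximalIdeal (R ⧸ I) = (maximalIdeal R).map (Ideal.Quotient.mk I) := by
  have hloc : IsLocalHom (Ideal.Quotient.mk I) :=
    .of_surjective _ Ideal.Quotient.mk_surjective
  refine le_antisymm (fun a ha => ?_) (((local_hom_TFAE (Ideal.Quotient.mk I)).out 0 2).mp hloc)
  obtain ⟨r, rfl⟩ := Ideal.Quotient.mk_surjective a
  exact Ideal.mem_map_of_mem _ fun h => ha (h.map _)

lemma isLocalRing_quotient_span_singleton [IsLocalRing R] {t : R} (ht : t ∈ maximalIdeal R) :
    IsLocalRing (R ⧸ Ideal.span {t}) := by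
  have : Nontrivial (R ⧸ Ideal.span {t}) := by
    rwa [Ideal.Quotient.nontrivial_iff, ne_eq, Ideal.span_singleton_eq_top]
  exact .of_surjective' (Ideal.Quotient.mk _) Ideal.Quotient.mk_surjective

lemma ringKrullDim_le_ringKrullDim_quotient_span_singleton_add_one [IsLocalRing R]
    [IsNoetherianRing R] {t : R} (ht : t ∈ maximalIdeal R) :
    ringKrullDim R ≤ ringKrullDim (R ⧸ Ideal.span {t}) + 1 := by
  have := ringKrullDim_le_ringKrullDim_quotient_add_card ({t} : Finset R)
    (by simpa [ringJacobson_eq_maximalIdeal] using ht)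
  rwa [Finset.coe_singleton, Finset.card_singleton, Nat.cast_one] at this

lemma span_eq_span_singleton_sup_erase_of_isUnit [DecidableEq R] {s : Finset R} {c : R → R}
    {t f : R} (ht : ∑ g ∈ s, c g * g = t) (hf : f ∈ s) (hc : IsUnit (c f)) :
    Ideal.span (s : Set R) = Ideal.span {t} ⊔ Ideal.span (s.erase f : Set R) := by
  have hsum : ∑ g ∈ s.erase f, c g * g ∈ Ideal.span (s.erase f : Set R) :=
    Ideal.sum_mem _ fun g hg => Ideal.mul_mem_left _ _ (Ideal.subset_span hg)
  apply le_antisymm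
  · refine Ideal.span_le.mpr fun g hg => ?_
    obtain rfl | hgf := eq_or_ne g f
    · rw [← Finset.add_sum_erase s _ hg] at ht
      refine (Ideal.unit_mul_mem_iff_mem _ hc).mp ?_
      rw [eq_sub_of_add_eq ht]
      exact sub_mem (Ideal.mem_sup_left (Ideal.mem_span_singleton_self t))
        (Ideal.mem_sup_right hsum)
    · exact Ideal.mem_sup_right (Ideal.subset_span (Finset.mem_erase_of_ne_of_mem hgf hg))
  · refine sup_le ?_ (Ideal.span_mono (Finset.coe_subset.mpr (s.erase_subset f)))
    rw [Ideal.span_singleton_le_iff_mem, ← ht]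
    exact Ideal.sum_mem _ fun g hg => Ideal.mul_mem_left _ _ (Ideal.subset_span hg)

lemma spanFinrank_maximalIdeal_quotient_lt [IsLocalRing R] [IsNoetherianRing R] {t : R}
    (ht : t ∈ maximalIdeal R) (ht' : t ∉ maximalIdeal R ^ 2) [IsLocalRing (R ⧸ Ideal.span {t})] :
    (maximalIdeal (R ⧸ Ideal.span {t})).spanFinrank < (maximalIdeal R).spanFinrank := by
  classical
  obtain ⟨s, hcard, hs : Ideal.span (s : Set R) = maximalIdeal R⟩ :=
    Submodule.FG.exists_span_finset_card_eq_spanFinrank (IsNoetherian.noetherian (maximalIdeal R))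
  obtain ⟨c, -, hc⟩ := Submodule.mem_span_finset.mp (hs.ge ht)
  obtain ⟨f, hf, hunit⟩ : ∃ f ∈ s, IsUnit (c f) := by
    by_contra! hcon
    refine ht' ?_
    rw [← hc, pow_two]
    exact Ideal.sum_mem _ fun g hg => Ideal.mul_mem_mul ((mem_maximalIdeal _).mpr (hcon g hg))
      (hs ▸ Ideal.subset_span hg)
  have hmax : maximalIdeal (R ⧸ Ideal.span {t}) =
      Ideal.span ((s.erase f).image (Ideal.Quotient.mk (Ideal.span {t})) : Set (R ⧸ _)) := by
    rw [maximalIdeal_quotient_eq_map, ← hs, span_eq_span_singleton_sup_erase_of_isUnit hc hf hunit,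
      Ideal.map_sup, Ideal.map_quotient_self, bot_sup_eq, Ideal.map_span, Finset.coe_image]
  calc (maximalIdeal (R ⧸ Ideal.span {t})).spanFinrank
      ≤ ((s.erase f).image (Ideal.Quotient.mk (Ideal.span {t}))).card := by
        rw [hmax, ← Set.ncard_coe_finset]
        exact Submodule.spanFinrank_span_le_ncard_of_finite (Finset.finite_toSet _)
    _ ≤ (s.erase f).card := Finset.card_image_le
    _ < s.card := Finset.card_erase_lt_of_mem hf
    _ = (maximalIdeal R).spanFinrank := hcard

lemma isRegularLocalRing_quotient_span_singleton [IsRegularLocalRing R] {t : R}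
    (ht : t ∈ maximalIdeal R) (ht' : t ∉ maximalIdeal R ^ 2) :
    IsRegularLocalRing (R ⧸ Ideal.span {t}) := by
  have := isLocalRing_quotient_span_singleton ht
  refine .of_spanFinrank_maximalIdeal_le _ (ENat.WithBot.add_le_add_one_right_iff.mp ?_)
  calc ((maximalIdeal (R ⧸ Ideal.span {t})).spanFinrank : WithBot ℕ∞) + 1
      ≤ (maximalIdeal R).spanFinrank := mod_cast spanFinrank_maximalIdeal_quotient_lt ht ht'
    _ = ringKrullDim R := IsRegularLocalRing.spanFinrank_maximalIdeal
    _ ≤ _ := ringKrullDim_le_ringKrullDim_quotient_span_singleton_add_one ht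

lemma exists_mem_maximalIdeal_notMem_sq_notMem_minimalPrimes [IsLocalRing R] [IsNoetherianRing R]
    (hR : maximalIdeal R ∉ minimalPrimes R) :
    ∃ t ∈ maximalIdeal R, t ∉ maximalIdeal R ^ 2 ∧ ∀ q ∈ minimalPrimes R, t ∉ q := by
  have hsq : ¬ maximalIdeal R ≤ maximalIdeal R ^ 2 := by
    intro h
    have h0 : maximalIdeal R = ⊥ :=
      Submodule.eq_bot_of_le_smul_of_le_jacobson_bot (maximalIdeal R) (maximalIdeal R)
        (IsNoetherian.noetherian _) (by rwa [smul_eq_mul, ← pow_two]) (maximalIdeal_le_jacobson _)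
    have hprime : (⊥ : Ideal R).IsPrime := h0 ▸ inferInstance
    exact hR (h0 ▸ ⟨⟨hprime, le_rfl⟩, fun q _ _ => bot_le⟩)
  by_contra! hcon
  have hcover : (maximalIdeal R : Set R) ⊆
      ⋃ q ∈ insert (maximalIdeal R ^ 2) (minimalPrimes R), (q : Set R) := by
    intro t ht
    by_cases h2 : t ∈ maximalIdeal R ^ 2
    · exact Set.mem_biUnion (Set.mem_insert _ _) h2
    · obtain ⟨q, hq, htq⟩ := hcon t ht h2
      exact Set.mem_biUnion (Set.mem_insert_of_mem _ hq) htq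
  obtain ⟨q, rfl | hq, hle⟩ := (Ideal.subset_union_prime_finite
    ((minimalPrimes.finite_of_isNoetherianRing R).insert (maximalIdeal R ^ 2)) (f := id)
    (maximalIdeal R ^ 2) (maximalIdeal R ^ 2)
    (by rintro q (rfl | hq) h _ <;> [exact absurd rfl h; exact hq.1.1])).mp hcover
  · exact hsq hle
  · exact hR (le_antisymm (le_maximalIdeal hq.1.1.ne_top) hle ▸ hq)

lemma isDomain_of_isPrime_span_singleton [IsLocalRing R] [IsNoetherianRing R] {t : R}
    (ht : t ∈ maximalIdeal R) [hprime : (Ideal.span {t}).IsPrime]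
    (htq : ∀ q ∈ minimalPrimes R, t ∉ q) : IsDomain R := by
  obtain ⟨q, hq, hqt⟩ := Ideal.exists_minimalPrimes_le (I := ⊥) (J := Ideal.span {t}) bot_le
  have hq0 : q = ⊥ := by
    refine Submodule.eq_bot_of_le_smul_of_le_jacobson_bot (maximalIdeal R) q
      (IsNoetherian.noetherian _) (fun a ha => ?_) (maximalIdeal_le_jacobson _)
    obtain ⟨b, rfl⟩ := Ideal.mem_span_singleton.mp (hqt ha)
    exact Ideal.mul_mem_mul ht ((hq.1.1.mem_or_mem ha).resolve_left (htq q hq))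
  have : (⊥ : Ideal R).IsPrime := hq0 ▸ hq.1.1
  exact .of_bot_isPrime R

variable (R) in
theorem isDomain_of_isRegularLocalRing [IsRegularLocalRing R] : IsDomain R := by
  induction hd : (maximalIdeal R).spanFinrank using Nat.strong_induction_on generalizing R with
  | _ d ih =>
  by_cases hmin : maximalIdeal R ∈ minimalPrimes R
  · have hdim := maximalIdeal_height_eq_ringKrullDim (R := R)
    rw [Ideal.height_eq_zero_iff.mpr hmin, ← IsRegularLocalRing.spanFinrank_maximalIdeal] at hdim
    have hrank : (maximalIdeal R).spanFinrank = 0 := mod_cast hdim.symm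
    have hbot : maximalIdeal R = ⊥ :=
      (Submodule.spanFinrank_eq_zero_iff_eq_bot (IsNoetherian.noetherian _)).mp hrank
    exact (isField_iff_maximalIdeal_eq.mpr hbot).isDomain
  · obtain ⟨t, ht, ht', htq⟩ := exists_mem_maximalIdeal_notMem_sq_notMem_minimalPrimes hmin
    have := isRegularLocalRing_quotient_span_singleton ht ht'
    have := ih _ (hd ▸ spanFinrank_maximalIdeal_quotient_lt ht ht') (R ⧸ Ideal.span {t}) rfl
    have := (Ideal.Quotient.isDomain_iff_prime (Ideal.span {t})).mp this
    exact isDomain_of_isPrime_span_singleton ht htq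

lemma spanFinrank_ofList_le_length (rs : List R) :
    (Ideal.ofList rs).spanFinrank ≤ rs.length := by
  classical
  have hset : {r | r ∈ rs} = (rs.toFinset : Set R) := by ext; simp
  rw [Ideal.ofList, hset]
  refine (Submodule.spanFinrank_span_le_ncard_of_finite rs.toFinset.finite_toSet).trans ?_
  rw [Set.ncard_coe_finset]
  exact rs.toFinset_card_le

lemma isWeaklyRegular_cons_of_quotient {r : R} {rs : List R} (hr : IsSMulRegular R r)
    (hrs : IsWeaklyRegular (R ⧸ Ideal.span {r}) (rs.map (Ideal.Quotient.mk (Ideal.span {r})))) :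
    IsWeaklyRegular R (r :: rs) := by
  refine .cons hr ?_
  have e : QuotSMulTop r R ≃ₗ[R] R ⧸ Ideal.span {r} := Submodule.quotEquivOfEq _ _ (by
    ext; simp [Submodule.mem_smul_pointwise_iff_exists, Ideal.mem_span_singleton, dvd_def, eq_comm])
  rw [e.isWeaklyRegular_congr]
  exact (isWeaklyRegular_map_algebraMap_iff (R ⧸ Ideal.span {r}) _ rs).mp hrs

theorem isWeaklyRegular_of_maximalIdeal_eq_ofList [IsLocalRing R] [IsNoetherianRing R]
    {rs : List R} (hrs : maximalIdeal R = Ideal.ofList rs) (hdim : rs.length ≤ ringKrullDim R) :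
    IsWeaklyRegular R rs := by
  induction hlen : rs.length generalizing R rs with
  | zero =>
    rw [List.length_eq_zero_iff.mp hlen]
    exact .nil R R
  | succ d ih =>
    obtain ⟨r, rs, rfl⟩ := List.exists_cons_of_length_eq_add_one hlen
    have hr : r ∈ maximalIdeal R := hrs ▸ Ideal.subset_span List.mem_cons_self
    have : IsRegularLocalRing R := .of_spanFinrank_maximalIdeal_le _
      (hdim.trans' (mod_cast hrs ▸ spanFinrank_ofList_le_length _))
    have : IsDomain R := isDomain_of_isRegularLocalRing R
    have hr0 : r ≠ 0 := by
      rintro rfl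
      have hle : (maximalIdeal R).spanFinrank ≤ rs.length := by
        rw [hrs, Ideal.ofList_cons, Ideal.span_singleton_zero, bot_sup_eq]
        exact spanFinrank_ofList_le_length rs
      have hlt : rs.length + 1 ≤ (maximalIdeal R).spanFinrank := by
        rw [← IsRegularLocalRing.spanFinrank_maximalIdeal] at hdim
        exact_mod_cast hdim
      lia
    have := isLocalRing_quotient_span_singleton hr
    refine isWeaklyRegular_cons_of_quotient (.of_ne_zero hr0) (ih ?_ ?_ (by simpa using hlen))
    · rw [maximalIdeal_quotient_eq_map, hrs, Ideal.map_ofList, List.map_cons, Ideal.ofList_cons]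
      simp
    · refine ENat.WithBot.add_le_add_one_right_iff.mp ?_
      simpa using hdim.trans (ringKrullDim_le_ringKrullDim_quotient_span_singleton_add_one hr)

end RegularLocalRing

section Length

variable {R M : Type*} [CommRing R] [AddCommGroup M] [Module R M]

lemma hasLength_of_length_eq {n : ℕ} (h : Module.length R M = n) : HasLength R M n := by
  have hfin : IsFiniteLength R M := Module.length_ne_top_iff.mp (by simp [h])
  obtain ⟨s, hs, hs'⟩ := isFiniteLength_iff_exists_compositionSeries.mp hfin
  have := Module.length_compositionSeries s hs hs'
  exact ⟨s, hs, hs', by exact_mod_cast this.trans h⟩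

/-- The family `v` is independent over `R ⧸ m` modulo `N`: a linear combination of `v` lies in `N`
only if all its coefficients lie in `m`. It is not required that `m • v i ≤ N`. -/
def IndependentModulo {ι : Type*} [Fintype ι] (m : Ideal R) (N : Submodule R M) (v : ι → M) :
    Prop :=
  ∀ r : ι → R, ∑ i, r i • v i ∈ N → ∀ i, r i ∈ m

namespace IndependentModulo

variable {ι : Type*} [Fintype ι] {m : Ideal R} {N N' : Submodule R M} {v w : ι → M}

lemma mono (hv : IndependentModulo m N v) (hN : N' ≤ N) : IndependentModulo m N' v :=
  fun r hr => hv r (hN hr)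

lemma congr (hv : IndependentModulo m N v) (hvw : ∀ i, w i - v i ∈ N) :
    IndependentModulo m N w := by
  refine fun r hr => hv r ?_
  have hsub : ∑ i, r i • (w i - v i) ∈ N := sum_mem fun i _ => N.smul_mem _ (hvw i)
  simp only [smul_sub, Finset.sum_sub_distrib] at hsub
  simpa using sub_mem hr hsub

lemma sup_span_inf_le (hw : IndependentModulo m N w) {L : Submodule R M} (hL : L ≤ N)
    (hmw : ∀ r ∈ m, ∀ i, r • w i ∈ L) :
    (L ⊔ Submodule.span R (Set.range w)) ⊓ N ≤ L := by
  rintro _ ⟨ht, htN⟩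
  obtain ⟨l, hl, _, hs, rfl⟩ := Submodule.mem_sup.mp ht
  obtain ⟨r, rfl⟩ := (Submodule.mem_span_range_iff_exists_fun R).mp hs
  have hr := hw r ((N.add_mem_iff_right (hL hl)).mp htN)
  exact add_mem hl (sum_mem fun i _ => hmw _ (hr i) i)

lemma length_quotient_comap_subtype [m.IsMaximal] {L : Submodule R M} {w : ι → M}
    (hw : IndependentModulo m N w) (hmw : ∀ r ∈ m, ∀ i, r • w i ∈ N)
    (hL : L = N ⊔ Submodule.span R (Set.range w)) :
    Module.length R (L ⧸ N.comap L.subtype) = Fintype.card ι := by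
  classical
  have hwL (i) : w i ∈ L := hL ▸ Submodule.mem_sup_right (Submodule.subset_span ⟨i, rfl⟩)
  let φ := (N.comap L.subtype).mkQ ∘ₗ Fintype.linearCombination R fun i => (⟨w i, hwL i⟩ : L)
  have hφ : Function.Surjective φ := by
    refine fun t => Submodule.Quotient.induction_on _ t fun ⟨u, hu⟩ => ?_
    obtain ⟨l, hl, _, hs, rfl⟩ := Submodule.mem_sup.mp (hL.le hu)
    obtain ⟨r, rfl⟩ := (Submodule.mem_span_range_iff_exists_fun R).mp hs
    exact ⟨r, (Submodule.Quotient.eq _).mpr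
      (by simpa [Fintype.linearCombination_apply] using hl)⟩
  have hker : LinearMap.ker φ = Submodule.pi Set.univ fun _ => m := by
    ext r
    have hmem : r ∈ LinearMap.ker φ ↔ ∑ i, r i • w i ∈ N := by
      rw [LinearMap.mem_ker, LinearMap.comp_apply, Submodule.mkQ_apply,
        Submodule.Quotient.mk_eq_zero]
      simp [Fintype.linearCombination_apply]
    rw [hmem]
    exact ⟨fun hr i _ => hw r hr i, fun hr => sum_mem fun i _ => hmw _ (hr i trivial) i⟩
  have e := (φ.quotKerEquivOfSurjective hφ).symm ≪≫ₗ Submodule.quotEquivOfEq _ _ hker ≪≫ₗ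
    Submodule.quotientPi _
  have hsimple : Module.length R (R ⧸ m) = 1 := by
    rw [Module.length_eq_one_iff, isSimpleModule_iff_isCoatom]
    exact Ideal.IsMaximal.out
  rw [e.length_eq, Module.length_pi_of_fintype]
  simp [hsimple]

lemma sumElim_mul {κ : Type*} [Fintype κ] {P Q : Ideal R} {x : R} {v : ι → R} {w : κ → R}
    (hv : IndependentModulo m (Q ⊔ Ideal.span {x}) v) (hmv : ∀ r ∈ m, ∀ i, r * v i ∈ Q)
    (hw : IndependentModulo m P w) (hx : ∀ t, x * t ∈ Q → t ∈ P) :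
    IndependentModulo m Q (Sum.elim v fun j => x * w j) := by
  intro r hr
  have hsum : ∑ j, r (.inr j) * (x * w j) = x * ∑ j, r (.inr j) * w j := by
    rw [Finset.mul_sum]
    exact Finset.sum_congr rfl fun j _ => mul_left_comm _ _ _
  simp only [Fintype.sum_sum_type, Sum.elim_inl, Sum.elim_inr, smul_eq_mul, hsum] at hr
  have hxw : x * ∑ j, r (.inr j) * w j ∈ Ideal.span {x} :=
    Ideal.mul_mem_right _ _ (Ideal.mem_span_singleton_self x)
  have hl : ∀ i, r (.inl i) ∈ m :=
    hv _ ((Submodule.add_mem_iff_left _ (Ideal.mem_sup_right hxw)).mp (Ideal.mem_sup_left hr))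
  have hr' := (Submodule.add_mem_iff_right _ (sum_mem fun i _ => hmv _ (hl i) i)).mp hr
  exact Sum.rec hl (hw _ (hx _ hr'))

end IndependentModulo

end Length

section RegularSequence

variable {R : Type*} [CommRing R]

lemma mem_span_triple (x y z : R) :
    x ∈ Ideal.span {x, y, z} ∧ y ∈ Ideal.span {x, y, z} ∧ z ∈ Ideal.span {x, y, z} :=
  ⟨Ideal.subset_span (by simp), Ideal.subset_span (by simp), Ideal.subset_span (by simp)⟩

lemma sup_pow_succ_le (A B : Ideal R) (d : ℕ) :
    (A ⊔ B) ^ (d + 1) ≤ A * (A ⊔ B) ^ d ⊔ B ^ (d + 1) := by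
  induction d with
  | zero => simp
  | succ d ih =>
    rw [pow_succ' (A ⊔ B) (d + 1), Ideal.sup_mul]
    refine sup_le le_sup_left ((Ideal.mul_mono_right ih).trans ?_)
    rw [Ideal.mul_sup, ← pow_succ', mul_left_comm, pow_succ' (A ⊔ B)]
    exact sup_le_sup_right (Ideal.mul_mono_right (Ideal.mul_mono_left le_sup_right)) _

lemma mem_ofList_take_of_getElem_pow_mul_mem {rs : List R} (h : IsWeaklyRegular R rs) {i : ℕ}
    (hi : i < rs.length) (n : ℕ) {u : R} (hu : rs[i] ^ n * u ∈ Ideal.ofList (rs.take i)) :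
    u ∈ Ideal.ofList (rs.take i) := by
  have hreg := (h.regular_mod_prev i hi).pow n
  rw [smul_eq_mul, Ideal.mul_top] at hreg
  exact mem_of_isSMulRegular_quotient_of_smul_mem hreg hu

variable {x y z : R}

lemma mem_span_singleton_of_pow_mul_mem (h : IsWeaklyRegular R [x, y, z]) (n : ℕ) {u : R}
    (hu : y ^ n * u ∈ Ideal.span {x}) : u ∈ Ideal.span {x} := by
  simpa using mem_ofList_take_of_getElem_pow_mul_mem h (i := 1) (by simp) n (by simpa using hu)

lemma mem_span_pair_of_pow_mul_mem (h : IsWeaklyRegular R [x, y, z]) (n : ℕ) {u : R}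
    (hu : z ^ n * u ∈ Ideal.span {x, y}) : u ∈ Ideal.span {x, y} := by
  rw [Ideal.span_insert] at hu ⊢
  simpa using mem_ofList_take_of_getElem_pow_mul_mem h (i := 2) (by simp) n (by simpa using hu)

lemma span_pair_pow_inf_span_singleton_le (h : IsWeaklyRegular R [x, y, z]) (d : ℕ) :
    Ideal.span {y, z} ^ d ⊓ Ideal.span {x} ≤ Ideal.span {x} * Ideal.span {x, y, z} ^ d := by
  induction d with
  | zero => simp
  | succ d ih =>
    rintro t ⟨ht, htx⟩
    rw [SetLike.mem_coe, Ideal.span_insert] at ht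
    obtain ⟨_, hys, _, hr, rfl⟩ := Submodule.mem_sup.mp (sup_pow_succ_le _ _ d ht)
    obtain ⟨s, hs, rfl⟩ := Ideal.mem_span_singleton_mul.mp hys
    rw [Ideal.span_singleton_pow] at hr
    obtain ⟨r, rfl⟩ := Ideal.mem_span_singleton.mp hr
    have hr : r ∈ Ideal.span {x, y} := mem_span_pair_of_pow_mul_mem h (d + 1) <|
      (Ideal.add_mem_iff_right _ (Ideal.mul_mem_right _ _ (Ideal.subset_span (by simp)))).mp
        (Ideal.span_mono (by simp) htx)
    obtain ⟨p, q, rfl⟩ := Ideal.mem_span_pair.mp hr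
    have hsplit : y * s + z ^ (d + 1) * (p * x + q * y) =
        y * (s + q * z ^ (d + 1)) + x * (p * z ^ (d + 1)) := by ring
    rw [hsplit] at htx ⊢
    have hxp : x * (p * z ^ (d + 1)) ∈ Ideal.span {x} :=
      Ideal.mul_mem_right _ _ (Ideal.mem_span_singleton_self x)
    have hs' : s + q * z ^ (d + 1) ∈ Ideal.span {x} :=
      mem_span_singleton_of_pow_mul_mem h 1 (by simpa using (Ideal.add_mem_iff_left _ hxp).mp htx)
    have hz : z ^ (d + 1) ∈ Ideal.span {y, z} ^ d := Ideal.pow_le_pow_right d.le_succ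
      (Ideal.pow_mem_pow (Ideal.subset_span (by simp)) _)
    rw [← Ideal.span_insert] at hs
    refine add_mem ?_ (Ideal.mul_mem_mul (Ideal.mem_span_singleton_self x)
      (Ideal.mul_mem_left _ _ (Ideal.pow_mem_pow (Ideal.subset_span (by simp)) _)))
    rw [pow_succ', mul_left_comm]
    exact Ideal.mul_mem_mul (Ideal.subset_span (by simp))
      (ih ⟨add_mem hs (Ideal.mul_mem_left _ _ hz), hs'⟩)

lemma mem_span_triple_pow_of_mul_mem (h : IsWeaklyRegular R [x, y, z]) {d : ℕ} {u : R}
    (hu : x * u ∈ Ideal.span {x, y, z} ^ (d + 1)) : u ∈ Ideal.span {x, y, z} ^ d := by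
  rw [Ideal.span_insert] at hu ⊢
  obtain ⟨_, hxa, t, ht, hsum⟩ := Submodule.mem_sup.mp (sup_pow_succ_le _ _ d hu)
  obtain ⟨a, ha, rfl⟩ := Ideal.mem_span_singleton_mul.mp hxa
  have htx : t ∈ Ideal.span {x} := Ideal.mem_span_singleton.mpr ⟨u - a, by linear_combination hsum⟩
  obtain ⟨b, hb, rfl⟩ := Ideal.mem_span_singleton_mul.mp
    (span_pair_pow_inf_span_singleton_le h (d + 1) ⟨ht, htx⟩)
  have hxreg : IsSMulRegular R x := ((isWeaklyRegular_cons_iff R x [y, z]).mp h).1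
  have hub : u = a + b := hxreg (by simp only [smul_eq_mul]; linear_combination -hsum)
  rw [Ideal.span_insert] at hb
  exact hub ▸ add_mem ha (Ideal.pow_le_pow_right d.le_succ hb)

lemma mem_span_triple_pow_of_pow_mul_mem (h : IsWeaklyRegular R [x, y, z]) {d : ℕ} (k : ℕ) {u : R}
    (hu : x ^ k * u ∈ Ideal.span {x, y, z} ^ (d + k)) : u ∈ Ideal.span {x, y, z} ^ d := by
  induction k generalizing d with
  | zero => simpa using hu
  | succ k ih =>
    rw [pow_succ', mul_assoc, ← add_assoc] at hu
    exact ih (mem_span_triple_pow_of_mul_mem h hu)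

lemma span_triple_pow_succ_le (x y z : R) (d : ℕ) :
    Ideal.span {x, y, z} ^ (d + 1) ≤
      Ideal.span {x} ⊔ Ideal.span {y} * Ideal.span {x, y, z} ^ d ⊔ Ideal.span {z ^ (d + 1)} := by
  have hyz : Ideal.span {y} ⊔ Ideal.span {z} ≤ Ideal.span {x, y, z} :=
    sup_le (Ideal.span_mono (by simp)) (Ideal.span_mono (by simp))
  have hJ := sup_pow_succ_le (Ideal.span {y}) (Ideal.span {z}) d
  rw [Ideal.span_singleton_pow] at hJ
  calc Ideal.span {x, y, z} ^ (d + 1)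
      = (Ideal.span {x} ⊔ (Ideal.span {y} ⊔ Ideal.span {z})) ^ (d + 1) := by
        simp only [Ideal.span_insert]
    _ ≤ Ideal.span {x} ⊔ (Ideal.span {y} ⊔ Ideal.span {z}) ^ (d + 1) :=
        (sup_pow_succ_le _ _ d).trans (sup_le_sup_right Ideal.mul_le_left _)
    _ ≤ Ideal.span {x} ⊔ (Ideal.span {y} * Ideal.span {x, y, z} ^ d ⊔ Ideal.span {z ^ (d + 1)}) :=
        sup_le_sup_left (hJ.trans
          (sup_le_sup_right (Ideal.mul_mono_right (Ideal.pow_right_mono hyz d)) _)) _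
    _ = _ := (sup_assoc _ _ _).symm

lemma mem_and_mem_of_pow_mul_add_mul_mem (h : IsWeaklyRegular R [x, y, z]) {d : ℕ} {r s : R}
    (hrs : z ^ d * r + y * s ∈ Ideal.span {x, y, z} ^ (d + 1) ⊔ Ideal.span {x}) :
    r ∈ Ideal.span {x, y, z} ∧ s ∈ Ideal.span {x, y, z} ^ d ⊔ Ideal.span {x} := by
  obtain ⟨_, hxw, _, hz, hsum⟩ := Submodule.mem_sup.mp
    (sup_le (span_triple_pow_succ_le x y z d) (le_sup_left.trans le_sup_left) hrs)
  obtain ⟨_, hx, _, hyw, rfl⟩ := Submodule.mem_sup.mp hxw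
  obtain ⟨a, rfl⟩ := Ideal.mem_span_singleton'.mp hx
  obtain ⟨w, hw, rfl⟩ := Ideal.mem_span_singleton_mul.mp hyw
  obtain ⟨p, rfl⟩ := Ideal.mem_span_singleton'.mp hz
  have hr : r - p * z ∈ Ideal.span {x, y} := mem_span_pair_of_pow_mul_mem h d
    (Ideal.mem_span_pair.mpr ⟨a, w - s, by linear_combination hsum⟩)
  obtain ⟨b, c, hbc⟩ := Ideal.mem_span_pair.mp hr
  have hs : s + c * z ^ d - w ∈ Ideal.span {x} := mem_span_singleton_of_pow_mul_mem h 1 <|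
    Ideal.mem_span_singleton'.mpr ⟨a - z ^ d * b, by linear_combination hsum - z ^ d * hbc⟩
  have hz : z ∈ Ideal.span {x, y, z} := Ideal.subset_span (by simp)
  have hxy : Ideal.span {x, y} ≤ Ideal.span {x, y, z} :=
    Ideal.span_mono (by simp [Set.insert_subset_iff])
  constructor
  · rw [← sub_add_cancel r (p * z)]
    exact add_mem (hxy hr) (Ideal.mul_mem_left _ _ hz)
  · have hsplit : s = (w - c * z ^ d) + (s + c * z ^ d - w) := by ring
    rw [hsplit]
    exact Submodule.add_mem_sup
      (sub_mem hw (Ideal.mul_mem_left _ _ (Ideal.pow_mem_pow hz d))) hs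

lemma independentModulo_pow_mul_pow (h : IsWeaklyRegular R [x, y, z]) (n e : ℕ) :
    IndependentModulo (Ideal.span {x, y, z}) (Ideal.span {x, y, z} ^ (n + e) ⊔ Ideal.span {x})
      fun i : Fin n => y ^ (i : ℕ) * z ^ (n + e - (i + 1)) := by
  induction n with
  | zero => exact fun r _ i => i.elim0
  | succ n ih =>
    intro r hr
    have hsum : ∑ i : Fin (n + 1), r i • (y ^ (i : ℕ) * z ^ (n + 1 + e - (i + 1))) =
        z ^ (n + e) * r 0 +
          y * ∑ i : Fin n, r i.succ • (y ^ (i : ℕ) * z ^ (n + e - (i + 1))) := by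
      rw [Fin.sum_univ_succ, Finset.mul_sum]
      congr 1
      · rw [Fin.val_zero, add_right_comm n 1 e, zero_add, Nat.add_sub_cancel, smul_eq_mul]
        ring
      · refine Finset.sum_congr rfl fun i _ => ?_
        rw [Fin.val_succ, add_right_comm n 1 e, Nat.add_sub_add_right, smul_eq_mul, smul_eq_mul]
        ring
    rw [hsum, add_right_comm n 1 e] at hr
    obtain ⟨hr₀, hr'⟩ := mem_and_mem_of_pow_mul_add_mul_mem h hr
    exact Fin.cases hr₀ (ih _ hr')

end RegularSequence

section LayerIdeal

variable {R : Type*} [CommRing R]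

/-- The ideal `∑_{i ≤ k} δ ^ i I ^ (n - 2 i)`, meant for `2 * k ≤ n` (otherwise the subtraction
truncates). When `δ` lies in the symbolic square of `I` it is contained in the `n`-th symbolic power
of `I`, and for the ideals studied here it turns out to be `I ^ n : m ^ k`. -/
def layerIdeal (I : Ideal R) (δ : R) (n k : ℕ) : Ideal R :=
  partialSups (fun i => Ideal.span {δ ^ i} * I ^ (n - 2 * i)) k

variable {I m : Ideal R} {δ : R} {n k : ℕ}

lemma layerIdeal_zero : layerIdeal I δ n 0 = I ^ n := by
  simp [layerIdeal]

lemma layerIdeal_succ :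
    layerIdeal I δ n (k + 1) =
      layerIdeal I δ n k ⊔ Ideal.span {δ ^ (k + 1)} * I ^ (n - 2 * (k + 1)) :=
  partialSups_add_one _ _

lemma layerIdeal_le_iff {K : Ideal R} :
    layerIdeal I δ n k ≤ K ↔ ∀ i ≤ k, Ideal.span {δ ^ i} * I ^ (n - 2 * i) ≤ K :=
  partialSups_le_iff

lemma span_pow_mul_pow_le_layerIdeal {i : ℕ} (hi : i ≤ k) :
    Ideal.span {δ ^ i} * I ^ (n - 2 * i) ≤ layerIdeal I δ n k :=
  layerIdeal_le_iff.mp le_rfl i hi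

lemma mul_layerIdeal_succ_le (hδ : m * Ideal.span {δ} ≤ I ^ 2) (hk : 2 * (k + 1) ≤ n) :
    m * layerIdeal I δ n (k + 1) ≤ layerIdeal I δ n k := by
  rw [layerIdeal_succ, Ideal.mul_sup]
  refine sup_le Ideal.mul_le_right ?_
  calc m * (Ideal.span {δ ^ (k + 1)} * I ^ (n - 2 * (k + 1)))
      = m * Ideal.span {δ} * (Ideal.span {δ ^ k} * I ^ (n - 2 * (k + 1))) := by
        rw [pow_succ', ← Ideal.span_singleton_mul_span_singleton, mul_assoc, mul_assoc]
    _ ≤ I ^ 2 * (Ideal.span {δ ^ k} * I ^ (n - 2 * (k + 1))) := Ideal.mul_mono_left hδ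
    _ = Ideal.span {δ ^ k} * I ^ (n - 2 * k) := by
        rw [mul_left_comm, ← pow_add]
        congr 2
        lia
    _ ≤ layerIdeal I δ n k := span_pow_mul_pow_le_layerIdeal le_rfl

lemma pow_mul_layerIdeal_le (hδ : m * Ideal.span {δ} ≤ I ^ 2) (hk : 2 * k ≤ n) :
    m ^ k * layerIdeal I δ n k ≤ I ^ n := by
  induction k with
  | zero => simp [layerIdeal_zero]
  | succ k ih =>
    rw [pow_succ, mul_assoc]
    exact (Ideal.mul_mono_right (mul_layerIdeal_succ_le hδ hk)).trans (ih (by lia))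

lemma layerIdeal_le_pow (hI : I ≤ m ^ 2) (hδ : δ ∈ m ^ 3) (hk : 2 * k ≤ n) :
    layerIdeal I δ n k ≤ m ^ (2 * n - k) := by
  refine layerIdeal_le_iff.mpr fun i hi => ?_
  calc Ideal.span {δ ^ i} * I ^ (n - 2 * i)
      ≤ (m ^ 3) ^ i * (m ^ 2) ^ (n - 2 * i) := by
        rw [← Ideal.span_singleton_pow]
        exact Ideal.mul_mono (Ideal.pow_right_mono ((Ideal.span_singleton_le_iff_mem _).mpr hδ) _)
          (Ideal.pow_right_mono hI _)
    _ = m ^ (3 * i + 2 * (n - 2 * i)) := by rw [← pow_mul, ← pow_mul, ← pow_add]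
    _ ≤ m ^ (2 * n - k) := Ideal.pow_le_pow_right (by lia)

variable (I δ n) in
/-- The largest layer `∑_{2 i ≤ n} δ ^ i I ^ (n - 2 i)`. -/
def topLayerIdeal : Ideal R :=
  layerIdeal I δ n (n / 2)

lemma layerIdeal_le_topLayerIdeal (hk : 2 * k ≤ n) : layerIdeal I δ n k ≤ topLayerIdeal I δ n :=
  layerIdeal_le_iff.mpr fun _ hi => span_pow_mul_pow_le_layerIdeal (by lia)

lemma pow_mul_mem_topLayerIdeal {i d : ℕ} {u : R} (hu : u ∈ I ^ d) (hn : d + 2 * i = n) :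
    δ ^ i * u ∈ topLayerIdeal I δ n := by
  refine span_pow_mul_pow_le_layerIdeal (i := i) (by lia)
    (Ideal.mul_mem_mul (Ideal.mem_span_singleton_self _) ?_)
  rwa [← hn, Nat.add_sub_cancel]

end LayerIdeal

section MinorMonomial

variable {R : Type*} [CommRing R] {a b c : R}

variable (a b c) in
/-- For `q` and `i` of the same parity, the monomial in the minors `a`, `b`, `c` whose initial form
is `y ^ i z ^ q` when those of `a`, `b`, `c` are `z ^ 2`, `y z`, `y ^ 2`. -/
def minorMonomial (q i : ℕ) : R :=
  a ^ (q / 2) * b ^ (i % 2) * c ^ (i / 2)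

variable (a b c) in
/-- The ideal generated by the monomials `minorMonomial a b c q i` of degree `d`, i.e. by the
monomials of degree `d` in `a`, `b`, `c` that are at most linear in `b`. -/
def minorMonomialIdeal (d : ℕ) : Ideal R :=
  Ideal.span (Set.range fun i : Fin (2 * d + 1) => minorMonomial a b c (2 * d - i) i)

lemma minorMonomial_even (p r : ℕ) : minorMonomial a b c (2 * p) (2 * r) = a ^ p * c ^ r := by
  simp [minorMonomial]

lemma minorMonomial_odd (p r : ℕ) :
    minorMonomial a b c (2 * p + 1) (2 * r + 1) = a ^ p * b * c ^ r := by
  simp [minorMonomial, Nat.mul_add_div]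

lemma minorMonomial_add_two (q i : ℕ) :
    minorMonomial a b c (q + 2) i = a * minorMonomial a b c q i := by
  simp only [minorMonomial, Nat.add_div_right q two_pos]
  ring

lemma minorMonomial_mem_pow {I : Ideal R} (ha : a ∈ I) (hb : b ∈ I) (hc : c ∈ I) {q i d : ℕ}
    (hd : q + i = 2 * d) : minorMonomial a b c q i ∈ I ^ d := by
  have hdeg : q / 2 + i % 2 + i / 2 = d := by lia
  rw [← hdeg, pow_add, pow_add]
  exact Ideal.mul_mem_mul (Ideal.mul_mem_mul (Ideal.pow_mem_pow ha _) (Ideal.pow_mem_pow hb _))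
    (Ideal.pow_mem_pow hc _)

lemma minorMonomial_mem_minorMonomialIdeal {q i d : ℕ} (hd : q + i = 2 * d) :
    minorMonomial a b c q i ∈ minorMonomialIdeal a b c d :=
  Ideal.subset_span ⟨⟨i, by lia⟩, congrArg (minorMonomial a b c · i) (by lia)⟩

lemma minorMonomialIdeal_le_iff {d : ℕ} {K : Ideal R} :
    minorMonomialIdeal a b c d ≤ K ↔ ∀ q i, q + i = 2 * d → minorMonomial a b c q i ∈ K := by
  refine ⟨fun h q i hd => h (minorMonomial_mem_minorMonomialIdeal hd), fun h => ?_⟩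
  exact Ideal.span_le.mpr (Set.range_subset_iff.mpr fun i => h _ _ (by lia))

lemma minorMonomialIdeal_zero : minorMonomialIdeal a b c 0 = ⊤ :=
  (Ideal.eq_top_iff_one _).mpr <| by
    simpa [minorMonomial] using minorMonomial_mem_minorMonomialIdeal (a := a) (b := b) (c := c)
      (q := 0) (i := 0) (d := 0) rfl

lemma span_le_minorMonomialIdeal_one : Ideal.span {a, b, c} ≤ minorMonomialIdeal a b c 1 := by
  have hmem {q i : ℕ} (hd : q + i = 2 * 1) :=
    minorMonomial_mem_minorMonomialIdeal (a := a) (b := b) (c := c) hd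
  rw [Ideal.span_le]
  rintro _ (rfl | rfl | rfl)
  · simpa [minorMonomial] using hmem (q := 2) (i := 0) rfl
  · simpa [minorMonomial] using hmem (q := 1) (i := 1) rfl
  · simpa [minorMonomial] using hmem (q := 0) (i := 2) rfl

lemma minorMonomialIdeal_le_pow (d : ℕ) :
    minorMonomialIdeal a b c d ≤ Ideal.span {a, b, c} ^ d :=
  have ⟨ha, hb, hc⟩ := mem_span_triple a b c
  minorMonomialIdeal_le_iff.mpr fun _ _ hd => minorMonomial_mem_pow ha hb hc hd

lemma span_pow_of_lt_two {d : ℕ} (hd : d < 2) :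
    Ideal.span {a, b, c} ^ d = minorMonomialIdeal a b c d := by
  refine le_antisymm ?_ (minorMonomialIdeal_le_pow d)
  interval_cases d
  · exact minorMonomialIdeal_zero.ge.trans' le_top
  · simpa using span_le_minorMonomialIdeal_one

lemma minorMonomial_add_two_right (q i : ℕ) :
    minorMonomial a b c q (i + 2) = c * minorMonomial a b c q i := by
  simp only [minorMonomial, Nat.add_div_right i two_pos, Nat.add_mod_right]
  ring

lemma mul_minorMonomial_mem {q i d : ℕ} (hd : q + i = 2 * (d + 1)) :
    b * minorMonomial a b c q i ∈ minorMonomialIdeal a b c (d + 2) ⊔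
      Ideal.span {b ^ 2 - a * c} * Ideal.span {a, b, c} ^ d := by
  obtain ⟨p, rfl | rfl⟩ := q.even_or_odd'
  · obtain ⟨r, rfl⟩ : ∃ r, i = 2 * r := ⟨i / 2, by lia⟩
    have hb : b * minorMonomial a b c (2 * p) (2 * r) =
        minorMonomial a b c (2 * p + 1) (2 * r + 1) := by
      rw [minorMonomial_even, minorMonomial_odd]
      ring
    exact hb ▸ Ideal.mem_sup_left (minorMonomial_mem_minorMonomialIdeal (by lia))
  · obtain ⟨r, rfl⟩ : ∃ r, i = 2 * r + 1 := ⟨i / 2, by lia⟩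
    have hb : b * minorMonomial a b c (2 * p + 1) (2 * r + 1) =
        minorMonomial a b c (2 * (p + 1)) (2 * (r + 1)) +
          (b ^ 2 - a * c) * minorMonomial a b c (2 * p) (2 * r) := by
      rw [minorMonomial_even, minorMonomial_even, minorMonomial_odd]
      ring
    rw [hb]
    exact Submodule.add_mem_sup (minorMonomial_mem_minorMonomialIdeal (by lia))
      (Ideal.mul_mem_mul (Ideal.mem_span_singleton_self _)
        (minorMonomialIdeal_le_pow d (minorMonomial_mem_minorMonomialIdeal (by lia))))

lemma mul_minorMonomialIdeal_succ_le (d : ℕ) :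
    Ideal.span {a, b, c} * minorMonomialIdeal a b c (d + 1) ≤ minorMonomialIdeal a b c (d + 2) ⊔
      Ideal.span {b ^ 2 - a * c} * Ideal.span {a, b, c} ^ d := by
  rw [minorMonomialIdeal, Ideal.span_mul_span', Ideal.span_le]
  rintro _ ⟨t, ht, _, ⟨i, rfl⟩, rfl⟩
  obtain rfl | rfl | rfl := ht
  · refine Ideal.mem_sup_left ?_
    simp only [← minorMonomial_add_two]
    exact minorMonomial_mem_minorMonomialIdeal (by lia)
  · exact mul_minorMonomial_mem (by lia)
  · refine Ideal.mem_sup_left ?_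
    simp only [← minorMonomial_add_two_right]
    exact minorMonomial_mem_minorMonomialIdeal (by lia)

lemma span_pow_add_two (d : ℕ) :
    Ideal.span {a, b, c} ^ (d + 2) = minorMonomialIdeal a b c (d + 2) ⊔
      Ideal.span {b ^ 2 - a * c} * Ideal.span {a, b, c} ^ d := by
  obtain ⟨ha, hb, hc⟩ := mem_span_triple a b c
  have hrel : Ideal.span {b ^ 2 - a * c} ≤ Ideal.span {a, b, c} ^ 2 := by
    rw [Ideal.span_singleton_le_iff_mem, sq (Ideal.span _)]
    exact sub_mem (sq b ▸ Ideal.mul_mem_mul hb hb) (Ideal.mul_mem_mul ha hc)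
  refine le_antisymm ?_ (sup_le (minorMonomialIdeal_le_pow _) ?_)
  · induction d with
    | zero =>
      rw [pow_succ', pow_one]
      exact (Ideal.mul_mono_right span_le_minorMonomialIdeal_one).trans
        (mul_minorMonomialIdeal_succ_le 0)
    | succ d ih =>
      rw [pow_succ']
      refine (Ideal.mul_mono_right ih).trans ?_
      rw [Ideal.mul_sup, mul_left_comm, ← pow_succ']
      exact sup_le (mul_minorMonomialIdeal_succ_le (d + 1)) le_sup_right
  · rw [add_comm d, pow_add]
    exact Ideal.mul_mono_left hrel

end MinorMonomial

section MinorSystem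

/-- `a`, `b`, `c` are, up to sign, the maximal minors of `((x, y, z), (y, z, x ^ 2))`, and `δ` is
the element of the second symbolic power of `(a, b, c)` determined by `x * δ = b ^ 2 - a * c` when
`x` is regular. -/
structure IsMinorSystem {R : Type*} [CommRing R] (x y z a b c δ : R) : Prop where
  a_eq : a = z ^ 2 - x ^ 2 * y
  b_eq : b = y * z - x ^ 3
  c_eq : c = y ^ 2 - x * z
  δ_eq : δ = x ^ 5 - 3 * x ^ 2 * y * z + z ^ 3 + x * y ^ 3

namespace IsMinorSystem

variable {R : Type*} [CommRing R] {x y z a b c δ : R}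

lemma x_mul_δ (h : IsMinorSystem x y z a b c δ) : x * δ = b ^ 2 - a * c := by
  rw [h.a_eq, h.b_eq, h.c_eq, h.δ_eq]
  ring

lemma y_mul_δ (h : IsMinorSystem x y z a b c δ) : y * δ = a * b + x * c ^ 2 := by
  rw [h.a_eq, h.b_eq, h.c_eq, h.δ_eq]
  ring

lemma z_mul_δ (h : IsMinorSystem x y z a b c δ) : z * δ = a ^ 2 + x * b * c := by
  rw [h.a_eq, h.b_eq, h.c_eq, h.δ_eq]
  ring

lemma y_mul_a (h : IsMinorSystem x y z a b c δ) : y * a = z * b - x ^ 2 * c := by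
  rw [h.a_eq, h.b_eq, h.c_eq]
  ring

lemma y_mul_b (h : IsMinorSystem x y z a b c δ) : y * b = z * c + x * a := by
  rw [h.a_eq, h.b_eq, h.c_eq]
  ring

lemma mul_span_δ_le (h : IsMinorSystem x y z a b c δ) :
    Ideal.span {x, y, z} * Ideal.span {δ} ≤ Ideal.span {a, b, c} ^ 2 := by
  obtain ⟨ha, hb, hc⟩ := mem_span_triple a b c
  rw [Ideal.span_mul_span', Ideal.span_le, sq]
  rintro _ ⟨t, ht, _, rfl, rfl⟩
  obtain rfl | rfl | rfl := ht
  · simp only [h.x_mul_δ, sq]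
    exact sub_mem (Ideal.mul_mem_mul hb hb) (Ideal.mul_mem_mul ha hc)
  · simp only [h.y_mul_δ, sq]
    exact add_mem (Ideal.mul_mem_mul ha hb) (Ideal.mul_mem_left _ _ (Ideal.mul_mem_mul hc hc))
  · simp only [h.z_mul_δ, sq, mul_assoc]
    exact add_mem (Ideal.mul_mem_mul ha ha) (Ideal.mul_mem_left _ _ (Ideal.mul_mem_mul hb hc))

lemma span_le_sq (h : IsMinorSystem x y z a b c δ) :
    Ideal.span {a, b, c} ≤ Ideal.span {x, y, z} ^ 2 := by
  obtain ⟨hx, hy, hz⟩ := mem_span_triple x y z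
  rw [h.a_eq, h.b_eq, h.c_eq, Ideal.span_le, sq (Ideal.span _)]
  rintro _ (rfl | rfl | rfl)
  · exact sub_mem (sq z ▸ Ideal.mul_mem_mul hz hz)
      (Ideal.mul_mem_mul (Ideal.pow_mem_of_mem _ hx 2 two_pos) hy)
  · exact sub_mem (Ideal.mul_mem_mul hy hz)
      (pow_succ x 2 ▸ Ideal.mul_mem_mul (Ideal.pow_mem_of_mem _ hx 2 two_pos) hx)
  · exact sub_mem (sq y ▸ Ideal.mul_mem_mul hy hy) (Ideal.mul_mem_mul hx hz)

lemma δ_mem_pow_three (h : IsMinorSystem x y z a b c δ) : δ ∈ Ideal.span {x, y, z} ^ 3 := by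
  obtain ⟨hx, hy, hz⟩ := mem_span_triple x y z
  have hδ : δ = x ^ 2 * x ^ 3 - 3 * z * (x ^ 2 * y) + z ^ 3 + x * y ^ 3 := by
    rw [h.δ_eq]
    ring
  have hxxy : x ^ 2 * y ∈ Ideal.span {x, y, z} ^ 3 := Ideal.mul_mem_mul (Ideal.pow_mem_pow hx 2) hy
  rw [hδ]
  exact add_mem (add_mem (sub_mem (Ideal.mul_mem_left _ _ (Ideal.pow_mem_pow hx 3))
    (Ideal.mul_mem_left _ _ hxxy)) (Ideal.pow_mem_pow hz 3))
    (Ideal.mul_mem_left _ _ (Ideal.pow_mem_pow hy 3))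

lemma pow_mul_minorMonomial_sub_mem (h : IsMinorSystem x y z a b c δ) {q i d : ℕ}
    (hd : q + i = 2 * d) (l : ℕ) :
    δ ^ l * minorMonomial a b c q i - y ^ i * z ^ (q + 3 * l) ∈ Ideal.span {x} := by
  have hx : Ideal.Quotient.mk (Ideal.span {x}) x = 0 :=
    Ideal.Quotient.eq_zero_iff_mem.mpr (Ideal.mem_span_singleton_self x)
  have hi : i = 2 * (i / 2) + i % 2 := by lia
  have hq : q = 2 * (q / 2) + i % 2 := by lia
  rw [← Ideal.Quotient.eq, minorMonomial, h.a_eq, h.b_eq, h.c_eq, h.δ_eq]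
  conv_rhs => rw [hi, hq]
  simp only [map_mul, map_pow, map_sub, map_add, hx]
  ring

lemma independentModulo_pow_mul_minorMonomial (h : IsMinorSystem x y z a b c δ)
    (hreg : IsWeaklyRegular R [x, y, z]) (d l : ℕ) :
    IndependentModulo (Ideal.span {x, y, z})
      (Ideal.span {x, y, z} ^ (2 * d + 3 * l + 1) ⊔ Ideal.span {x})
      fun i : Fin (2 * d + 1) => δ ^ l * minorMonomial a b c (2 * d - i) i := by
  rw [add_right_comm]
  refine (independentModulo_pow_mul_pow hreg (2 * d + 1) (3 * l)).congr fun i => ?_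
  have hexp : 2 * d + 1 + 3 * l - (i + 1) = 2 * d - i + 3 * l := by lia
  rw [hexp]
  exact Ideal.mem_sup_right (h.pow_mul_minorMonomial_sub_mem (d := d) (by lia) l)

lemma pow_mul_minorMonomial_mem_pow (h : IsMinorSystem x y z a b c δ) {q i d : ℕ}
    (hd : q + i = 2 * d) (l : ℕ) :
    δ ^ l * minorMonomial a b c q i ∈ Ideal.span {x, y, z} ^ (2 * d + 3 * l) := by
  obtain ⟨ha, hb, hc⟩ := mem_span_triple a b c
  rw [add_comm (2 * d), pow_add, pow_mul, pow_mul]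
  exact Ideal.mul_mem_mul (Ideal.pow_mem_pow h.δ_mem_pow_three l)
    (Ideal.pow_right_mono h.span_le_sq d (minorMonomial_mem_pow ha hb hc hd))

lemma exists_independentModulo_generators_of_lt_two (h : IsMinorSystem x y z a b c δ)
    (hreg : IsWeaklyRegular R [x, y, z]) {d : ℕ} (hd : d < 2) :
    ∃ (ι : Type) (_ : Fintype ι) (v : ι → R), Fintype.card ι = (d + 2).choose 2 ∧
      Ideal.span {a, b, c} ^ d = Ideal.span (Set.range v) ∧
      ∀ l, IndependentModulo (Ideal.span {x, y, z}) (Ideal.span {x, y, z} ^ (2 * d + 3 * l + 1))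
        fun i => δ ^ l * v i := by
  refine ⟨Fin (2 * d + 1), inferInstance, fun i => minorMonomial a b c (2 * d - i) i, ?_,
    span_pow_of_lt_two hd,
    fun l => (h.independentModulo_pow_mul_minorMonomial hreg d l).mono le_sup_left⟩
  interval_cases d <;> rfl

lemma independentModulo_sumElim (h : IsMinorSystem x y z a b c δ)
    (hreg : IsWeaklyRegular R [x, y, z]) {ι : Type*} [Fintype ι] {v : ι → R} {d l : ℕ}
    (hv : IndependentModulo (Ideal.span {x, y, z})
      (Ideal.span {x, y, z} ^ (2 * d + 3 * (l + 1) + 1)) fun i => δ ^ (l + 1) * v i) :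
    IndependentModulo (Ideal.span {x, y, z}) (Ideal.span {x, y, z} ^ (2 * (d + 2) + 3 * l + 1))
      fun i => δ ^ l * Sum.elim
        (fun i : Fin (2 * (d + 2) + 1) => minorMonomial a b c (2 * (d + 2) - i) i)
        (fun j => x * (δ * v j)) i := by
  have hsum := (h.independentModulo_pow_mul_minorMonomial hreg (d + 2) l).sumElim_mul ?_ hv ?_
  · convert hsum using 2 with i
    cases i
    · rfl
    · simp only [Sum.elim_inr]
      ring
  · rw [pow_succ']
    exact fun r hr i => Ideal.mul_mem_mul hr (h.pow_mul_minorMonomial_mem_pow (by lia) l)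
  · have hexp : 2 * (d + 2) + 3 * l + 1 = 2 * d + 3 * (l + 1) + 1 + 1 := by lia
    rw [hexp]
    exact fun t => mem_span_triple_pow_of_mul_mem hreg

lemma exists_independentModulo_generators (h : IsMinorSystem x y z a b c δ)
    (hreg : IsWeaklyRegular R [x, y, z]) (d : ℕ) :
    ∃ (ι : Type) (_ : Fintype ι) (v : ι → R), Fintype.card ι = (d + 2).choose 2 ∧
      Ideal.span {a, b, c} ^ d = Ideal.span (Set.range v) ∧
      ∀ l, IndependentModulo (Ideal.span {x, y, z}) (Ideal.span {x, y, z} ^ (2 * d + 3 * l + 1))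
        fun i => δ ^ l * v i := by
  induction d using Nat.twoStepInduction with
  | zero => exact h.exists_independentModulo_generators_of_lt_two hreg two_pos
  | one => exact h.exists_independentModulo_generators_of_lt_two hreg one_lt_two
  | more d ih _ =>
    obtain ⟨ι, _, v, hcard, hspan, hv⟩ := ih
    refine ⟨Fin (2 * (d + 2) + 1) ⊕ ι, inferInstance,
      Sum.elim (fun i => minorMonomial a b c (2 * (d + 2) - i) i) fun j => x * (δ * v j),
      ?_, ?_, fun l => h.independentModulo_sumElim hreg (hv (l + 1))⟩
    · simp only [Fintype.card_sum, Fintype.card_fin, hcard, Nat.choose_succ_succ' _ 1,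
        Nat.choose_one_right]
      lia
    · rw [Set.Sum.elim_range, Ideal.span_union, span_pow_add_two, ← h.x_mul_δ, hspan,
        Ideal.span_mul_span', Set.singleton_mul, ← Set.range_comp]
      simp only [minorMonomialIdeal, Function.comp_def, mul_assoc]

end IsMinorSystem

end MinorSystem

section Saturation

variable {R : Type*} [CommRing R] {x y z a b c δ : R} {n : ℕ}

lemma sup_span_singleton_inf_span_singleton_le (hreg : IsWeaklyRegular R [x, y, z]) {A J : Ideal R}
    {g : R} {k e : ℕ} (hA : A ≤ Ideal.span {x} ⊔ Ideal.span {y ^ (k + 1)})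
    (hAx : A ⊓ Ideal.span {x} ≤ Ideal.span {x} * J) (hg : g - y ^ k * z ^ e ∈ Ideal.span {x})
    (hgJ : g ∈ J) (hyg : y * g ∈ A ⊔ Ideal.span {x} * J) :
    (A ⊔ Ideal.span {g}) ⊓ Ideal.span {x} ≤ Ideal.span {x} * J := by
  rintro _ ⟨ht, htx⟩
  obtain ⟨u, hu, _, hs, rfl⟩ := Submodule.mem_sup.mp ht
  obtain ⟨s, rfl⟩ := Ideal.mem_span_singleton'.mp hs
  obtain ⟨_, hp, _, hq, hpq⟩ := Submodule.mem_sup.mp (hA hu)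
  obtain ⟨p, rfl⟩ := Ideal.mem_span_singleton'.mp hp
  obtain ⟨q, rfl⟩ := Ideal.mem_span_singleton'.mp hq
  obtain ⟨v, hv⟩ := Ideal.mem_span_singleton'.mp hg
  obtain ⟨w, hw⟩ := Ideal.mem_span_singleton'.mp htx
  have hyk : y ^ k * (q * y + s * z ^ e) ∈ Ideal.span {x} := Ideal.mem_span_singleton'.mpr
    ⟨w - p - s * v, by linear_combination hw - hpq - s * hv⟩
  obtain ⟨r, hr⟩ := Ideal.mem_span_singleton'.mp (mem_span_singleton_of_pow_mul_mem hreg k hyk)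
  have hs : s ∈ Ideal.span {x, y} := mem_span_pair_of_pow_mul_mem hreg e
    (Ideal.mem_span_pair.mpr ⟨r, -q, by linear_combination hr⟩)
  obtain ⟨s₁, s₂, rfl⟩ := Ideal.mem_span_pair.mp hs
  obtain ⟨u', hu', _, hxj, hsum⟩ := Submodule.mem_sup.mp hyg
  obtain ⟨j, hj, rfl⟩ := Ideal.mem_span_singleton_mul.mp hxj
  have hsplit : u + (s₁ * x + s₂ * y) * g = (u + s₂ * u') + x * (s₁ * g + s₂ * j) := by
    linear_combination -s₂ * hsum
  have hxJ : x * (s₁ * g + s₂ * j) ∈ Ideal.span {x} * J := Ideal.mul_mem_mul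
    (Ideal.mem_span_singleton_self x) (add_mem (J.mul_mem_left _ hgJ) (J.mul_mem_left _ hj))
  rw [hsplit] at htx ⊢
  exact add_mem (hAx ⟨add_mem hu (A.mul_mem_left _ hu'),
    (Ideal.add_mem_iff_left _ (Ideal.mul_le_left hxJ)).mp htx⟩) hxJ

variable (a b c δ) in
/-- For `q + j = 2 * n`, the element of the `n`-th symbolic power of `(a, b, c)` with reduction
`y ^ j * z ^ e` modulo `x` for the smallest possible `e`: every fourth power of `z` is gained at the
price of only `z ^ 3` by using `δ` instead of `a ^ 2`. -/
def stair (q j : ℕ) : R :=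
  δ ^ (q / 4) * minorMonomial a b c (q % 4) j

variable (a b c δ n) in
/-- The ideal generated by the elements `stair a b c δ i j` with `i + j = 2 * n` and `i ≤ q`. -/
def stairIdeal (q : ℕ) : Ideal R :=
  partialSups (fun i => Ideal.span {stair a b c δ i (2 * n - i)}) q

lemma stair_of_lt_four {t : ℕ} (ht : t < 4) (l j : ℕ) :
    stair a b c δ (4 * l + t) j = δ ^ l * minorMonomial a b c t j := by
  rw [stair, Nat.mul_add_mod, Nat.mod_eq_of_lt ht, Nat.mul_add_div four_pos,
    Nat.div_eq_of_lt ht, add_zero]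

lemma pow_mul_minorMonomial_mem_topLayerIdeal {q i l d : ℕ} (hd : q + i = 2 * d)
    (hn : d + 2 * l = n) :
    δ ^ l * minorMonomial a b c q i ∈ topLayerIdeal (Ideal.span {a, b, c}) δ n :=
  have ⟨ha, hb, hc⟩ := mem_span_triple a b c
  pow_mul_mem_topLayerIdeal (minorMonomial_mem_pow ha hb hc hd) hn

lemma stair_mem_topLayerIdeal {q j : ℕ} (hn : q + j = 2 * n) :
    stair a b c δ q j ∈ topLayerIdeal (Ideal.span {a, b, c}) δ n :=
  pow_mul_minorMonomial_mem_topLayerIdeal (d := (q % 4 + j) / 2) (by lia) (by lia)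

lemma stair_mem_stairIdeal {q i j : ℕ} (hi : i ≤ q) (hn : i + j = 2 * n) :
    stair a b c δ i j ∈ stairIdeal a b c δ n q := by
  obtain rfl : j = 2 * n - i := by lia
  exact le_partialSups_of_le (fun i => Ideal.span {stair a b c δ i (2 * n - i)}) hi
    (Ideal.mem_span_singleton_self _)

namespace IsMinorSystem

lemma stair_sub_mem (h : IsMinorSystem x y z a b c δ) {q j : ℕ} (hn : q + j = 2 * n) :
    stair a b c δ q j - y ^ j * z ^ (q % 4 + 3 * (q / 4)) ∈ Ideal.span {x} :=
  h.pow_mul_minorMonomial_sub_mem (d := (q % 4 + j) / 2) (by lia) _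

lemma stairIdeal_le_sup (h : IsMinorSystem x y z a b c δ) {q j : ℕ} (hn : q + j = 2 * n) :
    stairIdeal a b c δ n q ≤ Ideal.span {x} ⊔ Ideal.span {y ^ j} := by
  refine partialSups_le _ _ _ fun i hi => (Ideal.span_singleton_le_iff_mem _).mpr ?_
  rw [← sub_add_cancel (stair a b c δ i (2 * n - i))]
  refine Submodule.add_mem_sup (h.stair_sub_mem (n := n) (by lia)) (Ideal.mul_mem_right _ _ ?_)
  exact Ideal.mem_span_singleton.mpr (pow_dvd_pow y (by lia))

lemma exists_y_mul_stair_succ_eq (h : IsMinorSystem x y z a b c δ) {q j : ℕ}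
    (hn : q + 1 + j = 2 * n) :
    ∃ s, ∃ w ∈ topLayerIdeal (Ideal.span {a, b, c}) δ n,
      y * stair a b c δ (q + 1) j = s * stair a b c δ q (j + 1) + x * w := by
  obtain ⟨l, t, ht, rfl⟩ : ∃ l t, t < 4 ∧ q = 4 * l + t := ⟨q / 4, q % 4, by lia, by lia⟩
  obtain ⟨r, rfl | rfl⟩ := j.even_or_odd'
  · obtain rfl | rfl : t = 1 ∨ t = 3 := by lia
    · refine ⟨z, -x * (δ ^ l * minorMonomial a b c (2 * 0) (2 * (r + 1))), Ideal.mul_mem_left _ _ <|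
        pow_mul_minorMonomial_mem_topLayerIdeal (d := r + 1) (by lia) (by lia), ?_⟩
      rw [add_assoc, stair_of_lt_four (by lia), stair_of_lt_four (by lia),
        minorMonomial_even 1 r, minorMonomial_odd 0 r, minorMonomial_even]
      linear_combination δ ^ l * c ^ r * h.y_mul_a
    · refine ⟨1, δ ^ l * minorMonomial a b c (2 * 0) (2 * (r + 2)),
        pow_mul_minorMonomial_mem_topLayerIdeal (d := r + 2) (by lia) (by lia), ?_⟩
      have hq : 4 * l + 3 + 1 = 4 * (l + 1) + 0 := by lia
      rw [hq, stair_of_lt_four (by lia), stair_of_lt_four (by lia),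
        minorMonomial_even 0 r, minorMonomial_odd 1 r, minorMonomial_even]
      linear_combination δ ^ l * c ^ r * h.y_mul_δ
  · obtain rfl | rfl : t = 0 ∨ t = 2 := by lia
    · refine ⟨z, δ ^ l * minorMonomial a b c (2 * 1) (2 * r),
        pow_mul_minorMonomial_mem_topLayerIdeal (d := r + 1) (by lia) (by lia), ?_⟩
      rw [add_assoc, stair_of_lt_four (by lia), stair_of_lt_four (by lia), minorMonomial_odd 0 r,
        minorMonomial_add_two_right, minorMonomial_even 0 r, minorMonomial_even]
      linear_combination δ ^ l * c ^ r * h.y_mul_b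
    · refine ⟨z, δ ^ l * minorMonomial a b c (2 * 2) (2 * r),
        pow_mul_minorMonomial_mem_topLayerIdeal (d := r + 2) (by lia) (by lia), ?_⟩
      rw [add_assoc, stair_of_lt_four (by lia), stair_of_lt_four (by lia), minorMonomial_odd 1 r,
        minorMonomial_add_two_right, minorMonomial_even 1 r, minorMonomial_even]
      linear_combination δ ^ l * a * c ^ r * h.y_mul_b

lemma pow_mul_minorMonomial_mem_sup (h : IsMinorSystem x y z a b c δ) {q i l d : ℕ}
    (hd : q + i = 2 * d) (hn : d + 2 * l = n) :
    δ ^ l * minorMonomial a b c q i ∈ Ideal.span {stair a b c δ (4 * l + q) i} ⊔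
      Ideal.span {x} * topLayerIdeal (Ideal.span {a, b, c}) δ n := by
  induction q using Nat.strong_induction_on generalizing l d with | _ q ih
  rcases lt_or_ge q 4 with hq | hq
  · rw [stair_of_lt_four hq]
    exact Ideal.mem_sup_left (Ideal.mem_span_singleton_self _)
  · obtain ⟨q, rfl⟩ := Nat.exists_eq_add_of_le' hq
    obtain ⟨d, rfl⟩ : ∃ e, d = e + 2 := ⟨d - 2, by lia⟩
    obtain ⟨ha, hb, hc⟩ := mem_span_triple a b c
    have hw : δ ^ l * (b * (c * minorMonomial a b c q i)) ∈
        topLayerIdeal (Ideal.span {a, b, c}) δ n := by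
      refine pow_mul_mem_topLayerIdeal (d := d + 2) ?_ hn
      rw [pow_succ', pow_succ']
      exact Ideal.mul_mem_mul hb (Ideal.mul_mem_mul hc (minorMonomial_mem_pow ha hb hc (by lia)))
    have hsplit : δ ^ l * minorMonomial a b c (q + 4) i =
        z * (δ ^ (l + 1) * minorMonomial a b c q i) -
          x * (δ ^ l * (b * (c * minorMonomial a b c q i))) := by
      rw [minorMonomial_add_two (q + 2), minorMonomial_add_two q]
      linear_combination -δ ^ l * minorMonomial a b c q i * h.z_mul_δ
    have hstair : 4 * l + (q + 4) = 4 * (l + 1) + q := by lia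
    rw [hsplit, hstair]
    exact sub_mem (Ideal.mul_mem_left _ _ (ih q (by lia) (l := l + 1) (d := d) (by lia) (by lia)))
      (Ideal.mem_sup_right (Ideal.mul_mem_mul (Ideal.mem_span_singleton_self x) hw))

lemma span_pow_mul_minorMonomialIdeal_le (h : IsMinorSystem x y z a b c δ) {l d : ℕ}
    (hn : d + 2 * l = n) :
    Ideal.span {δ ^ l} * minorMonomialIdeal a b c d ≤ stairIdeal a b c δ n (2 * n) ⊔
      Ideal.span {x} * topLayerIdeal (Ideal.span {a, b, c}) δ n := by
  rw [minorMonomialIdeal, Ideal.span_mul_span', Set.singleton_mul, Ideal.span_le]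
  rintro _ ⟨_, ⟨i, rfl⟩, rfl⟩
  have hstair : Ideal.span {stair a b c δ (4 * l + (2 * d - i)) i} ≤ stairIdeal a b c δ n (2 * n) :=
    (Ideal.span_singleton_le_iff_mem _).mpr (stair_mem_stairIdeal (by lia) (by lia))
  exact sup_le_sup_right hstair _ (h.pow_mul_minorMonomial_mem_sup (d := d) (by lia) hn)

lemma topLayerIdeal_le_sup (h : IsMinorSystem x y z a b c δ) (n : ℕ) :
    topLayerIdeal (Ideal.span {a, b, c}) δ n ≤ stairIdeal a b c δ n (2 * n) ⊔
      Ideal.span {x} * topLayerIdeal (Ideal.span {a, b, c}) δ n := by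
  refine layerIdeal_le_iff.mpr fun l hl => ?_
  rcases lt_or_ge (n - 2 * l) 2 with hd | hd
  · rw [span_pow_of_lt_two hd]
    exact h.span_pow_mul_minorMonomialIdeal_le (by lia)
  · obtain ⟨d, hd⟩ := Nat.exists_eq_add_of_le' hd
    rw [hd, span_pow_add_two, Ideal.mul_sup, ← h.x_mul_δ]
    refine sup_le (h.span_pow_mul_minorMonomialIdeal_le (by lia)) (le_sup_of_le_right ?_)
    rw [← Ideal.span_singleton_mul_span_singleton, mul_assoc, mul_left_comm,
      ← mul_assoc _ _ (_ ^ d), Ideal.span_singleton_mul_span_singleton, ← pow_succ]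
    obtain rfl : d = n - 2 * (l + 1) := by lia
    exact Ideal.mul_mono_right (span_pow_mul_pow_le_layerIdeal (by lia))

lemma stairIdeal_inf_le (h : IsMinorSystem x y z a b c δ) (hreg : IsWeaklyRegular R [x, y, z])
    {q j : ℕ} (hn : q + j = 2 * n) :
    stairIdeal a b c δ n q ⊓ Ideal.span {x} ≤
      Ideal.span {x} * topLayerIdeal (Ideal.span {a, b, c}) δ n := by
  induction q generalizing j with
  | zero =>
    obtain rfl : j = 2 * n := by lia
    rintro _ ⟨ht, htx⟩
    obtain ⟨t, rfl⟩ : ∃ t, t * stair a b c δ 0 (2 * n) = _ := Ideal.mem_span_singleton'.mp ht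
    have hty : y ^ (2 * n) * t ∈ Ideal.span {x} := by
      have hsub := sub_mem htx (Ideal.mul_mem_left _ t (h.stair_sub_mem hn))
      rwa [← mul_sub, sub_sub_cancel, Nat.zero_div, Nat.zero_mod, pow_zero, mul_one,
        mul_comm] at hsub
    exact Ideal.mul_mem_mul (mem_span_singleton_of_pow_mul_mem hreg _ hty)
      (stair_mem_topLayerIdeal hn)
  | succ q ih =>
    have hsucc : stairIdeal a b c δ n (q + 1) =
        stairIdeal a b c δ n q ⊔ Ideal.span {stair a b c δ (q + 1) j} := by
      obtain rfl : j = 2 * n - (q + 1) := by lia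
      exact partialSups_add_one _ _
    obtain ⟨s, w, hw, hyg⟩ := h.exists_y_mul_stair_succ_eq hn
    rw [hsucc]
    refine sup_span_singleton_inf_span_singleton_le hreg (h.stairIdeal_le_sup (by lia))
      (ih (j := j + 1) (by lia)) (h.stair_sub_mem hn) (stair_mem_topLayerIdeal hn) ?_
    rw [hyg]
    exact Submodule.add_mem_sup (Ideal.mul_mem_left _ _ (stair_mem_stairIdeal le_rfl (by lia)))
      (Ideal.mul_mem_mul (Ideal.mem_span_singleton_self x) hw)

lemma mem_topLayerIdeal_of_mul_mem (h : IsMinorSystem x y z a b c δ)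
    (hreg : IsWeaklyRegular R [x, y, z]) {u : R}
    (hu : x * u ∈ topLayerIdeal (Ideal.span {a, b, c}) δ n) :
    u ∈ topLayerIdeal (Ideal.span {a, b, c}) δ n := by
  obtain ⟨g, hg, _, hxw, hsum⟩ := Submodule.mem_sup.mp (h.topLayerIdeal_le_sup n hu)
  obtain ⟨w, hw, rfl⟩ := Ideal.mem_span_singleton_mul.mp hxw
  have hgx : g ∈ Ideal.span {x} :=
    Ideal.mem_span_singleton.mpr ⟨u - w, by linear_combination hsum⟩
  obtain ⟨v, hv, rfl⟩ := Ideal.mem_span_singleton_mul.mp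
    (h.stairIdeal_inf_le hreg (j := 0) rfl ⟨hg, hgx⟩)
  have hxreg : IsSMulRegular R x := ((isWeaklyRegular_cons_iff R x [y, z]).mp hreg).1
  have huv : u = v + w := hxreg (by simp only [smul_eq_mul]; linear_combination -hsum)
  exact huv ▸ add_mem hv hw

lemma mem_topLayerIdeal_of_pow_mul_mem (h : IsMinorSystem x y z a b c δ)
    (hreg : IsWeaklyRegular R [x, y, z]) {k : ℕ} {u : R}
    (hu : x ^ k * u ∈ topLayerIdeal (Ideal.span {a, b, c}) δ n) :
    u ∈ topLayerIdeal (Ideal.span {a, b, c}) δ n := by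
  induction k with
  | zero => simpa using hu
  | succ k ih =>
    rw [pow_succ', mul_assoc] at hu
    exact ih (h.mem_topLayerIdeal_of_mul_mem hreg hu)

end IsMinorSystem

end Saturation

section Colon

variable {R : Type*} [CommRing R] {x y z a b c δ : R} {n k : ℕ}

namespace IsMinorSystem

lemma exists_independentModulo_layerIdeal (h : IsMinorSystem x y z a b c δ)
    (hreg : IsWeaklyRegular R [x, y, z]) (hk : 2 * (k + 1) ≤ n) :
    ∃ (ι : Type) (_ : Fintype ι) (w : ι → R),
      Fintype.card ι = (n - 2 * (k + 1) + 2).choose 2 ∧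
      layerIdeal (Ideal.span {a, b, c}) δ n (k + 1) =
        layerIdeal (Ideal.span {a, b, c}) δ n k ⊔ Ideal.span (Set.range w) ∧
      (∀ r ∈ Ideal.span {x, y, z}, ∀ i, r • w i ∈ layerIdeal (Ideal.span {a, b, c}) δ n k) ∧
      IndependentModulo (Ideal.span {x, y, z}) (Ideal.span {x, y, z} ^ (2 * n - k)) w := by
  obtain ⟨ι, _, v, hcard, hspan, hv⟩ := h.exists_independentModulo_generators hreg (n - 2 * (k + 1))
  have hlayer : layerIdeal (Ideal.span {a, b, c}) δ n (k + 1) =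
      layerIdeal (Ideal.span {a, b, c}) δ n k ⊔
        Ideal.span (Set.range fun i => δ ^ (k + 1) * v i) := by
    rw [layerIdeal_succ, hspan, Ideal.span_mul_span', Set.singleton_mul, ← Set.range_comp]
    rfl
  refine ⟨ι, ‹_›, _, hcard, hlayer, fun r hr i => ?_, ?_⟩
  · refine mul_layerIdeal_succ_le h.mul_span_δ_le hk (Ideal.mul_mem_mul hr ?_)
    exact hlayer ▸ Ideal.mem_sup_right (Ideal.subset_span ⟨i, rfl⟩)
  · have hexp : 2 * n - k = 2 * (n - 2 * (k + 1)) + 3 * (k + 1) + 1 := by lia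
    exact hexp ▸ hv (k + 1)

lemma mem_layerIdeal_of_mem_pow (h : IsMinorSystem x y z a b c δ)
    (hreg : IsWeaklyRegular R [x, y, z]) {i : ℕ} (hk : 2 * (k + i) ≤ n) {u : R}
    (hu : u ∈ layerIdeal (Ideal.span {a, b, c}) δ n (k + i))
    (hum : u ∈ Ideal.span {x, y, z} ^ (2 * n - k)) :
    u ∈ layerIdeal (Ideal.span {a, b, c}) δ n k := by
  induction i with
  | zero => exact hu
  | succ i ih =>
    obtain ⟨ι, _, w, -, hspan, hmw, hw⟩ :=
      h.exists_independentModulo_layerIdeal hreg (k := k + i) (n := n) (by lia)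
    refine ih (by lia) (hw.sup_span_inf_le ?_ hmw ⟨hspan.le hu, ?_⟩)
    · exact layerIdeal_le_pow h.span_le_sq h.δ_mem_pow_three (by lia)
    · exact Ideal.pow_le_pow_right (by lia) hum

lemma colon_pow_eq_layerIdeal (h : IsMinorSystem x y z a b c δ)
    (hreg : IsWeaklyRegular R [x, y, z]) (hk : 2 * k ≤ n) :
    Submodule.colon (Ideal.span {a, b, c} ^ n) (Ideal.span {x, y, z} ^ k : Ideal R) =
      layerIdeal (Ideal.span {a, b, c}) δ n k := by
  refine le_antisymm (fun u hu => ?_) (fun u hu => Submodule.mem_colon.mpr fun t ht => ?_)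
  · have hxu : x ^ k * u ∈ Ideal.span {a, b, c} ^ n := by
      rw [mul_comm]
      exact Submodule.mem_colon.mp hu _ (Ideal.pow_mem_pow (mem_span_triple x y z).1 k)
    have hum : u ∈ Ideal.span {x, y, z} ^ (2 * n - k) := by
      refine mem_span_triple_pow_of_pow_mul_mem hreg k ?_
      rw [Nat.sub_add_cancel (by lia), pow_mul]
      exact Ideal.pow_right_mono h.span_le_sq n hxu
    have htop : u ∈ topLayerIdeal (Ideal.span {a, b, c}) δ n :=
      h.mem_topLayerIdeal_of_pow_mul_mem hreg
        (layerIdeal_le_topLayerIdeal (k := 0) (by lia) (layerIdeal_zero.ge hxu))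
    obtain ⟨i, hi⟩ : ∃ i, n / 2 = k + i := ⟨n / 2 - k, by lia⟩
    exact h.mem_layerIdeal_of_mem_pow hreg (i := i) (by lia) (by rwa [← hi]) hum
  · rw [smul_eq_mul, mul_comm]
    exact pow_mul_layerIdeal_le h.mul_span_δ_le hk (Ideal.mul_mem_mul ht hu)

lemma length_layerIdeal_succ_quotient (h : IsMinorSystem x y z a b c δ)
    (hreg : IsWeaklyRegular R [x, y, z]) [(Ideal.span {x, y, z}).IsMaximal]
    (hk : 2 * (k + 1) ≤ n) :
    Module.length R (layerIdeal (Ideal.span {a, b, c}) δ n (k + 1) ⧸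
      Submodule.comap (layerIdeal (Ideal.span {a, b, c}) δ n (k + 1)).subtype
        (layerIdeal (Ideal.span {a, b, c}) δ n k)) =
      (n - 2 * (k + 1) + 2).choose 2 := by
  obtain ⟨ι, _, w, hcard, hspan, hmw, hw⟩ := h.exists_independentModulo_layerIdeal hreg hk
  rw [← hcard]
  refine (hw.mono ?_).length_quotient_comap_subtype hmw hspan
  exact layerIdeal_le_pow h.span_le_sq h.δ_mem_pow_three (by lia)

end IsMinorSystem

end Colon

theorem colon_layers_length_general {R : Type*} [CommRing R] {x y z : R}
    (hreg : IsWeaklyRegular R [x, y, z]) {m : Ideal R} [m.IsMaximal] (hm : m = Ideal.span {x, y, z})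
    {I : Ideal R} (hI : I = Ideal.span {z ^ 2 - x ^ 2 * y, x ^ 3 - y * z, y ^ 2 - x * z})
    {n k : ℕ} (hk : 1 ≤ k) (hkn : k ≤ n / 2) :
    HasLength R
      (↥(Submodule.colon (I ^ n) (m ^ k : Ideal R)) ⧸
        Submodule.comap (Submodule.colon (I ^ n) (m ^ k : Ideal R)).subtype
          (Submodule.colon (I ^ n) (m ^ (k - 1) : Ideal R)))
      ((n - 2 * k + 2).choose 2) := by
  subst hm
  obtain ⟨k, rfl⟩ := Nat.exists_eq_add_of_le' hk
  have h : IsMinorSystem x y z _ _ _ _ := ⟨rfl, rfl, rfl, rfl⟩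
  have hI' : I = Ideal.span {z ^ 2 - x ^ 2 * y, y * z - x ^ 3, y ^ 2 - x * z} := by
    rw [hI, ← neg_sub (y * z)]
    simp only [Ideal.span_insert, Ideal.span_singleton_neg]
  refine hasLength_of_length_eq ?_
  rw [hI', Nat.add_sub_cancel, h.colon_pow_eq_layerIdeal hreg (k := k) (n := n) (by lia),
    h.colon_pow_eq_layerIdeal hreg (by lia)]
  exact h.length_layerIdeal_succ_quotient hreg (by lia)

/-- Let `R` be a 3-dimensional regular local ring with `m = (x, y, z)` and
`I = (z² - x²y, x³ - yz, y² - xz)`.  For `n ≥ 2` and `1 ≤ k ≤ ⌊n/2⌋`,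
`length((Iⁿ :_R m^k)/(Iⁿ :_R m^{k-1})) = C(n - 2k + 2, 2)`. -/
theorem colon_layers_length
    {R : Type*} [CommRing R] [IsNoetherianRing R] [IsLocalRing R]
    (hdim : ringKrullDim R = 3)
    (x y z : R) (hreg : maximalIdeal R = Ideal.span {x, y, z})
    (I : Ideal R)
    (hI : I = Ideal.span {z ^ 2 - x ^ 2 * y, x ^ 3 - y * z, y ^ 2 - x * z}) :
    ∀ n : ℕ, 2 ≤ n → ∀ k : ℕ, 1 ≤ k → k ≤ n / 2 →
      HasLength R
        (↥(Submodule.colon ((I ^ n : Ideal R) : Submodule R R)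
            ((maximalIdeal R ^ k : Ideal R) : Submodule R R)) ⧸
          Submodule.comap
            (Submodule.colon ((I ^ n : Ideal R) : Submodule R R)
              ((maximalIdeal R ^ k : Ideal R) : Submodule R R)).subtype
            (Submodule.colon ((I ^ n : Ideal R) : Submodule R R)
              ((maximalIdeal R ^ (k - 1) : Ideal R) : Submodule R R)))
        ((n - 2 * k + 2).choose 2) := by
  intro n _ k hk hkn
  have hrs : maximalIdeal R = Ideal.ofList [x, y, z] := by
    simpa [Ideal.span_insert] using hreg
  have hseq := isWeaklyRegular_of_maximalIdeal_eq_ofList hrs hdim.ge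
  exact colon_layers_length_general hseq hreg hI hk hkn
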